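/- arXiv:1411.6779 — 2 statements merged into one kernel-verified Lean document; each statement's English description precedes it below -/
import Mathlib

section
/- Let X be a CAT(0) space and T₁, T₂ : X → X satisfy property (P₂). If Fix(T₂ ∘ T₁) ≠ ∅, then for any x₀ ∈ X the sequences given by d(y_n, T₁x_n) ≤ ε_n and d(x_{n+1}, T₂y_n) ≤ δ_n (with Σε_n < ∞, Σδ_n < ∞) are asymptotically regular: lim d(x_n, x_{n+1}) = 0 and lim d(y_n, y_{n+1}) = 0. -/
open Filter Topology Metric Set

/-- A (chosen) geodesic bicombing witnessing that `X` is a geodesic space: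
`geo x y t` is the point at parameter fraction `t ∈ [0,1]` on a geodesic from `x` to `y`. -/
structure Geodesic (X : Type*) [MetricSpace X] where
  geo : X → X → ℝ → X
  geo_zero : ∀ x y, geo x y 0 = x
  geo_one : ∀ x y, geo x y 1 = y
  geo_dist : ∀ x y : X, ∀ s ∈ Set.Icc (0:ℝ) 1, ∀ t ∈ Set.Icc (0:ℝ) 1,
    dist (geo x y s) (geo x y t) = |s - t| * dist x y

/-- The CN (Bruhat–Tits) inequality characterizing CAT(0) among geodesic spaces. -/
def CAT0 (X : Type*) [MetricSpace X] : Prop :=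
  ∀ x y z m : X, dist x m = dist x y / 2 → dist y m = dist x y / 2 →
    dist z m ^ 2 ≤ dist z x ^ 2 / 2 + dist z y ^ 2 / 2 - dist x y ^ 2 / 4

/-- Property (P₂). -/
def PropP2 {X : Type*} [MetricSpace X] (T : X → X) : Prop :=
  ∀ x y : X, 2 * dist (T x) (T y) ^ 2 ≤
    dist x (T y) ^ 2 + dist y (T x) ^ 2 - dist x (T x) ^ 2 - dist y (T y) ^ 2

/-!
Write `⟨xy, uv⟩` for Berg and Nikolaev's quasilinearization, the expression in distances that in a
Hilbert space equals `⟪y - x, v - u⟫`. In a CAT(0) space it satisfies the Cauchy–Schwarz inequality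
`⟨xy, uv⟩ ≤ d(x, y) d(u, v)` (Reshetnyak's four-point inequality), and (P₂) says
`d(Tx, Ty)² ≤ ⟨xy, TxTy⟩`. Add this up for `T₁` at `x, y` and for `T₂` at `u = T₁x, v = T₁y`. With
`S = T₂ ∘ T₁`, regrouping `⟨xy, uv⟩ + ⟨SxSy, uv⟩ = ⟨xSy, uv⟩ + ⟨Sxy, uv⟩` and Cauchy–Schwarz
give `2 d(Sx, Sy) ≤ d(x, Sy) + d(Sx, y)`. Along an orbit, the limits `ξ k = limₙ d(Sⁿz, Sⁿ⁺ᵏz)`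
therefore form a convex sequence with `ξ 0 = 0`. If the orbit is bounded this sequence is bounded,
hence nonincreasing, so `ξ 1 = 0`. Summable errors do not affect asymptotic regularity because the
inexact iteration restarted at a late index stays close to an exact orbit.
-/

open Bornology

section QuasiInner

variable {X : Type*} [PseudoMetricSpace X]

/-- The quasilinearization `⟨xy, uv⟩` of Berg and Nikolaev, a substitute in metric spaces for the
inner product of the vectors from `x` to `y` and from `u` to `v`, normalized so that
`⟨xy, xy⟩ = d(x, y)²`. -/
noncomputable def quasiInner (x y u v : X) : ℝ :=
  (dist x v ^ 2 + dist y u ^ 2 - dist x u ^ 2 - dist y v ^ 2) / 2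

lemma quasiInner_comm (x y u v : X) : quasiInner x y u v = quasiInner u v x y := by
  simp only [quasiInner, dist_comm u, dist_comm v]
  ring

lemma quasiInner_add_quasiInner (x y z u v : X) :
    quasiInner x y u v + quasiInner y z u v = quasiInner x z u v := by
  simp only [quasiInner]
  ring

lemma quasiInner_add_quasiInner_swap (x y x' y' u v : X) :
    quasiInner x y u v + quasiInner x' y' u v = quasiInner x y' u v + quasiInner x' y u v := by
  simp only [quasiInner]
  ring

lemma quasiInner_le_nat_mul {w : ℕ → X} {u v : X} {p : ℕ} {c : ℝ}
    (hw : ∀ i < p, quasiInner (w i) (w (i + 1)) u v ≤ c) :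
    quasiInner (w 0) (w p) u v ≤ p * c := by
  induction p with
  | zero => simp [quasiInner]
  | succ p ih =>
    rw [← quasiInner_add_quasiInner _ (w p)]
    push_cast
    linarith [ih fun i hi => hw i (by omega), hw p p.lt_succ_self]

end QuasiInner

namespace Geodesic

variable {X : Type*} [MetricSpace X]

lemma exists_midpoint (G : Geodesic X) (x y : X) :
    ∃ m, dist x m = dist x y / 2 ∧ dist y m = dist x y / 2 := by
  have hhalf : (1 / 2 : ℝ) ∈ Icc (0 : ℝ) 1 := by norm_num
  refine ⟨G.geo x y (1 / 2), ?_, ?_⟩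
  · have h := G.geo_dist x y 0 (by simp) _ hhalf
    rw [G.geo_zero] at h
    norm_num at h
    linarith
  · have h := G.geo_dist x y 1 (by simp) _ hhalf
    rw [G.geo_one] at h
    norm_num [abs_of_pos] at h
    linarith

lemma exists_chain (G : Geodesic X) (x y : X) {r : ℝ} (hr : 0 < r) :
    ∃ (p : ℕ) (w : ℕ → X), w 0 = x ∧ w p = y ∧ (∀ i < p, dist (w i) (w (i + 1)) ≤ r) ∧
      p * r ≤ dist x y + r := by
  set p : ℕ := ⌊dist x y / r⌋₊ + 1
  have hp : (0 : ℝ) < p := by positivity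
  have hmem (i : ℕ) (hi : i ≤ p) : (i / p : ℝ) ∈ Icc (0 : ℝ) 1 :=
    ⟨by positivity, div_le_one_of_le₀ (by exact_mod_cast hi) hp.le⟩
  refine ⟨p, fun i => G.geo x y (i / p), by simp [G.geo_zero], by simp [hp.ne', G.geo_one],
    fun i hi => ?_, ?_⟩
  · have hstep : |(i : ℝ) / p - (i + 1 : ℕ) / p| = 1 / p := by
      rw [← sub_div, abs_div, abs_of_pos hp]
      simp
    rw [G.geo_dist x y _ (hmem i hi.le) _ (hmem (i + 1) hi), hstep, one_div_mul_eq_div,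
      div_le_iff₀ hp, mul_comm, ← div_le_iff₀ hr]
    exact_mod_cast (Nat.lt_floor_add_one (dist x y / r)).le
  · have hfloor : (⌊dist x y / r⌋₊ : ℝ) * r ≤ dist x y :=
      (le_div_iff₀ hr).1 (Nat.floor_le (by positivity))
    simp only [p]
    push_cast
    linarith

end Geodesic

section CAT0

variable {X : Type*} [MetricSpace X]

lemma CAT0.quasiInner_le_half_add_sq (hX : CAT0 X) (G : Geodesic X) (x y u v : X) :
    quasiInner x y u v ≤ (dist x y ^ 2 + dist u v ^ 2) / 2 := by
  obtain ⟨m, hxm, hvm⟩ := G.exists_midpoint x v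
  have hy := hX x v y m hxm hvm
  have hu := hX x v u m hxm hvm
  have hyu : dist y u ^ 2 ≤ 2 * (dist y m ^ 2 + dist u m ^ 2) :=
    (pow_le_pow_left₀ dist_nonneg (dist_triangle_right y u m) 2).trans add_sq_le
  rw [dist_comm y x] at hy
  rw [dist_comm u x] at hu
  simp only [quasiInner]
  linarith

/-- Since `quasiInner` is additive along both segments, cutting them into pieces of length at most
`r` and bounding each pair of pieces by `r ^ 2` gives the product of the lengths as `r → 0`. -/
theorem CAT0.quasiInner_le_dist_mul_dist (hX : CAT0 X) (G : Geodesic X) (x y u v : X) :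
    quasiInner x y u v ≤ dist x y * dist u v := by
  have hle (r : ℝ) (hr : 0 < r) :
      quasiInner x y u v ≤ (dist x y + r) * (dist u v + r) := by
    obtain ⟨p, w, rfl, rfl, hw, hp⟩ := G.exists_chain x y hr
    obtain ⟨q, z, rfl, rfl, hz, hq⟩ := G.exists_chain u v hr
    have hpiece (i : ℕ) (hi : i < p) (j : ℕ) (hj : j < q) :
        quasiInner (z j) (z (j + 1)) (w i) (w (i + 1)) ≤ r ^ 2 := by
      have hzj := pow_le_pow_left₀ dist_nonneg (hz j hj) 2
      have hwi := pow_le_pow_left₀ dist_nonneg (hw i hi) 2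
      linarith [hX.quasiInner_le_half_add_sq G (z j) (z (j + 1)) (w i) (w (i + 1))]
    have hrow (i : ℕ) (hi : i < p) :
        quasiInner (w i) (w (i + 1)) (z 0) (z q) ≤ q * r ^ 2 := by
      rw [quasiInner_comm]
      exact quasiInner_le_nat_mul (hpiece i hi)
    calc quasiInner (w 0) (w p) (z 0) (z q)
        ≤ p * (q * r ^ 2) := quasiInner_le_nat_mul hrow
      _ = (p * r) * (q * r) := by ring
      _ ≤ (dist (w 0) (w p) + r) * (dist (z 0) (z q) + r) := by gcongr
  have hlim : Tendsto (fun r : ℝ => (dist x y + r) * (dist u v + r)) (𝓝[>] 0)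
      (𝓝 (dist x y * dist u v)) := by
    have hcont : Continuous fun r : ℝ => (dist x y + r) * (dist u v + r) := by fun_prop
    simpa using hcont.continuousWithinAt (s := Ioi 0) (x := 0) |>.tendsto
  exact ge_of_tendsto hlim (eventually_nhdsWithin_of_forall hle)

end CAT0

namespace PropP2

variable {X : Type*} [MetricSpace X] {T T₁ T₂ : X → X}

lemma dist_sq_le_quasiInner (hT : PropP2 T) (x y : X) :
    dist (T x) (T y) ^ 2 ≤ quasiInner x y (T x) (T y) := by
  simp only [quasiInner]
  linarith [hT x y]

lemma lipschitzWith_one (hT : PropP2 T) (hX : CAT0 X) (G : Geodesic X) : LipschitzWith 1 T := by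
  refine LipschitzWith.mk_one fun x y => ?_
  have hsq := hT.dist_sq_le_quasiInner x y
  have hbound := hX.quasiInner_le_half_add_sq G x y (T x) (T y)
  exact (sq_le_sq₀ dist_nonneg dist_nonneg).1 (by linarith)

theorem two_mul_dist_comp_le (h₁ : PropP2 T₁) (h₂ : PropP2 T₂) (hX : CAT0 X) (G : Geodesic X)
    (x y : X) :
    2 * dist ((T₂ ∘ T₁) x) ((T₂ ∘ T₁) y) ≤ dist x ((T₂ ∘ T₁) y) + dist ((T₂ ∘ T₁) x) y := by
  set S := T₂ ∘ T₁
  set b := dist (T₁ x) (T₁ y)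
  have hSb : dist (S x) (S y) ≤ b := by
    simpa [S, b] using (h₂.lipschitzWith_one hX G).dist_le_mul (T₁ x) (T₁ y)
  have hsum : dist (S x) (S y) ^ 2 + b ^ 2 ≤ (dist x (S y) + dist (S x) y) * b :=
    calc dist (S x) (S y) ^ 2 + b ^ 2
        ≤ quasiInner (T₁ x) (T₁ y) (S x) (S y) + quasiInner x y (T₁ x) (T₁ y) :=
          add_le_add (h₂.dist_sq_le_quasiInner _ _) (h₁.dist_sq_le_quasiInner _ _)
      _ = quasiInner x (S y) (T₁ x) (T₁ y) + quasiInner (S x) y (T₁ x) (T₁ y) := by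
          rw [quasiInner_comm, add_comm, quasiInner_add_quasiInner_swap]
      _ ≤ dist x (S y) * b + dist (S x) y * b :=
          add_le_add (hX.quasiInner_le_dist_mul_dist G _ _ _ _)
            (hX.quasiInner_le_dist_mul_dist G _ _ _ _)
      _ = (dist x (S y) + dist (S x) y) * b := by ring
  rcases (dist_nonneg : 0 ≤ b).eq_or_lt with hb | hb
  · linarith [dist_nonneg (x := x) (y := S y), dist_nonneg (x := S x) (y := y)]
  · refine le_of_mul_le_mul_right ?_ hb
    linarith [two_mul_le_add_sq (dist (S x) (S y)) b]

end PropP2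

theorem antitone_of_two_mul_le_add_of_bddAbove {ξ : ℕ → ℝ}
    (hconv : ∀ k, 2 * ξ (k + 1) ≤ ξ k + ξ (k + 2)) (hbdd : BddAbove (range ξ)) :
    Antitone ξ := by
  have hmono : Monotone fun k => ξ (k + 1) - ξ k :=
    monotone_nat_of_le_succ fun k => by linarith [hconv k]
  refine antitone_nat_of_succ_le fun m => ?_
  by_contra! hlt
  have hgrowth (k : ℕ) : ξ m + k * (ξ (m + 1) - ξ m) ≤ ξ (m + k) := by
    induction k with
    | zero => simp
    | succ k ih =>
      have hinc : ξ (m + 1) - ξ m ≤ ξ (m + k + 1) - ξ (m + k) := hmono (Nat.le_add_right m k)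
      rw [← add_assoc]
      push_cast
      linarith
  obtain ⟨C, hC⟩ := hbdd
  obtain ⟨k, hk⟩ := exists_nat_gt ((C - ξ m) / (ξ (m + 1) - ξ m))
  rw [div_lt_iff₀ (sub_pos.2 hlt)] at hk
  linarith [hgrowth k, hC (mem_range_self (m + k))]

section Nonexpansive

variable {X : Type*} [PseudoMetricSpace X] {S : X → X}

lemma isBounded_range_iterate_of_lipschitzWith_one (hS : LipschitzWith 1 S) {u : X}
    (hu : IsBounded (range fun n => S^[n] u)) (z : X) :
    IsBounded (range fun n => S^[n] z) := by
  obtain ⟨C, hC⟩ := isBounded_range_iff.1 hu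
  have hle (n : ℕ) : dist (S^[n] z) (S^[n] u) ≤ dist z u := by
    simpa using (hS.iterate n).dist_le_mul z u
  refine isBounded_range_iff.2 ⟨dist z u + C + dist z u, fun m n => ?_⟩
  have htri := dist_triangle4_right (S^[m] z) (S^[n] z) (S^[m] u) (S^[n] u)
  linarith [hle m, hle n, hC m n]

theorem tendsto_dist_iterate_succ_of_two_mul_dist_le (hS : LipschitzWith 1 S)
    (hmid : ∀ x y, 2 * dist (S x) (S y) ≤ dist x (S y) + dist (S x) y) {z : X}
    (hz : IsBounded (range fun n => S^[n] z)) :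
    Tendsto (fun n => dist (S^[n] z) (S^[n + 1] z)) atTop (𝓝 0) := by
  have hanti (k : ℕ) : Antitone fun n => dist (S^[n] z) (S^[n + k] z) := by
    refine antitone_nat_of_succ_le fun n => ?_
    rw [add_right_comm, Function.iterate_succ_apply', Function.iterate_succ_apply']
    simpa using hS.dist_le_mul (S^[n] z) (S^[n + k] z)
  have hlim (k : ℕ) : ∃ l, Tendsto (fun n => dist (S^[n] z) (S^[n + k] z)) atTop (𝓝 l) :=
    ⟨_, tendsto_atTop_ciInf (hanti k) ⟨0, forall_mem_range.2 fun _ => dist_nonneg⟩⟩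
  choose ξ hξ using hlim
  have hξ_zero : ξ 0 = 0 := tendsto_nhds_unique (hξ 0) (by simp)
  have hconv (k : ℕ) : 2 * ξ (k + 1) ≤ ξ k + ξ (k + 2) := by
    refine le_of_tendsto_of_tendsto'
      (((hξ (k + 1)).comp (tendsto_add_atTop_nat 1)).const_mul 2)
      (((hξ k).comp (tendsto_add_atTop_nat 1)).add (hξ (k + 2))) fun n => ?_
    have h := hmid (S^[n] z) (S^[n + (k + 1)] z)
    simp only [← Function.iterate_succ_apply'] at h
    simp only [Function.comp_apply, add_right_comm n 1]
    exact h.trans_eq (add_comm _ _)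
  obtain ⟨C, hC⟩ := isBounded_range_iff.1 hz
  have hbdd : BddAbove (range ξ) :=
    ⟨C, forall_mem_range.2 fun k => le_of_tendsto' (hξ k) fun n => hC n (n + k)⟩
  have hξ_one : ξ 1 = 0 := le_antisymm
    (hξ_zero ▸ antitone_of_two_mul_le_add_of_bddAbove hconv hbdd zero_le_one)
    (ge_of_tendsto' (hξ 1) fun _ => dist_nonneg)
  exact hξ_one ▸ hξ 1

lemma dist_iterate_le_sum_of_dist_succ_le (hS : LipschitzWith 1 S) {x : ℕ → X} {η : ℕ → ℝ}
    (hx : ∀ n, dist (x (n + 1)) (S (x n)) ≤ η n) (m : ℕ) :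
    dist (x m) (S^[m] (x 0)) ≤ ∑ k ∈ Finset.range m, η k := by
  induction m with
  | zero => simp
  | succ m ih =>
    rw [Finset.sum_range_succ, Function.iterate_succ_apply']
    have hstep : dist (S (x m)) (S (S^[m] (x 0))) ≤ dist (x m) (S^[m] (x 0)) := by
      simpa using hS.dist_le_mul (x m) (S^[m] (x 0))
    linarith [hx m, dist_triangle (x (m + 1)) (S (x m)) (S (S^[m] (x 0)))]

theorem tendsto_dist_succ_of_summable_error (hS : LipschitzWith 1 S)
    (hreg : ∀ z, Tendsto (fun n => dist (S^[n] z) (S^[n + 1] z)) atTop (𝓝 0))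
    {x : ℕ → X} {η : ℕ → ℝ} (hη : Summable η) (hx : ∀ n, dist (x (n + 1)) (S (x n)) ≤ η n) :
    Tendsto (fun n => dist (x n) (x (n + 1))) atTop (𝓝 0) := by
  refine tendsto_order.2 ⟨fun a ha => .of_forall fun n => ha.trans_le dist_nonneg, fun e he => ?_⟩
  obtain ⟨N, hN⟩ :=
    ((tendsto_sum_nat_add η).eventually (gt_mem_nhds (show 0 < e / 3 by positivity))).exists
  have hclose (m : ℕ) : dist (x (m + N)) (S^[m] (x N)) < e / 3 := by
    have hsum := dist_iterate_le_sum_of_dist_succ_le hS (x := fun m => x (m + N))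
      (η := fun m => η (m + N)) (fun m => by simpa [add_right_comm] using hx (m + N)) m
    have htail := ((summable_nat_add_iff N).2 hη).sum_le_tsum (Finset.range m)
      fun k _ => dist_nonneg.trans (hx (k + N))
    rw [zero_add] at hsum
    linarith
  rw [← map_add_atTop_eq_nat N, eventually_map]
  filter_upwards [(hreg (x N)).eventually (gt_mem_nhds (show 0 < e / 3 by positivity))] with m hm
  have htri := dist_triangle4_right (x (m + N)) (x (m + 1 + N)) (S^[m] (x N)) (S^[m + 1] (x N))
  rw [add_right_comm m N 1]
  linarith [hclose m, hclose (m + 1)]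

lemma tendsto_dist_succ_of_dist_map_le {Y : Type*} [PseudoMetricSpace Y] {T : X → Y}
    (hT : LipschitzWith 1 T) {x : ℕ → X} {y : ℕ → Y} {ε : ℕ → ℝ} (hε : Tendsto ε atTop (𝓝 0))
    (hy : ∀ n, dist (y n) (T (x n)) ≤ ε n)
    (hx : Tendsto (fun n => dist (x n) (x (n + 1))) atTop (𝓝 0)) :
    Tendsto (fun n => dist (y n) (y (n + 1))) atTop (𝓝 0) := by
  have hbound : Tendsto (fun n => ε n + dist (x n) (x (n + 1)) + ε (n + 1)) atTop (𝓝 0) := by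
    simpa using (hε.add hx).add (hε.comp (tendsto_add_atTop_nat 1))
  refine squeeze_zero (fun _ => dist_nonneg) (fun n => ?_) hbound
  have htri := dist_triangle4_right (y n) (y (n + 1)) (T (x n)) (T (x (n + 1)))
  have hstep : dist (T (x n)) (T (x (n + 1))) ≤ dist (x n) (x (n + 1)) := by
    simpa using hT.dist_le_mul (x n) (x (n + 1))
  linarith [hy n, hy (n + 1)]

end Nonexpansive

theorem two_maps_asymptotically_regular_general {X : Type*} [MetricSpace X]
    (G : Geodesic X) (hX : CAT0 X) {T₁ T₂ : X → X} (h₁ : PropP2 T₁) (h₂ : PropP2 T₂)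
    {u : X} (hu : IsBounded (range fun n => (T₂ ∘ T₁)^[n] u))
    {ε δ : ℕ → ℝ} (hε : Summable ε) (hδ : Summable δ) {x y : ℕ → X}
    (hy : ∀ n, dist (y n) (T₁ (x n)) ≤ ε n) (hx : ∀ n, dist (x (n + 1)) (T₂ (y n)) ≤ δ n) :
    Tendsto (fun n => dist (x n) (x (n + 1))) atTop (𝓝 0) ∧
      Tendsto (fun n => dist (y n) (y (n + 1))) atTop (𝓝 0) := by
  have hT₁ := h₁.lipschitzWith_one hX G
  have hT₂ := h₂.lipschitzWith_one hX G
  have hS : LipschitzWith 1 (T₂ ∘ T₁) := by simpa using hT₂.comp hT₁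
  have hreg (z : X) :=
    tendsto_dist_iterate_succ_of_two_mul_dist_le hS (h₁.two_mul_dist_comp_le h₂ hX G)
      (isBounded_range_iterate_of_lipschitzWith_one hS hu z)
  have herror (n : ℕ) : dist (x (n + 1)) ((T₂ ∘ T₁) (x n)) ≤ δ n + ε n :=
    (dist_triangle _ (T₂ (y n)) _).trans <| add_le_add (hx n) <| by
      simpa using hT₂.dist_le_mul_of_le (hy n)
  have hx_reg := tendsto_dist_succ_of_summable_error hS hreg (hδ.add hε) herror
  exact ⟨hx_reg, tendsto_dist_succ_of_dist_map_le hT₁ hε.tendsto_atTop_zero hy hx_reg⟩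

/-- Asymptotic regularity of the inexact alternating iteration of two mappings with
property (P₂) whose composition has a fixed point, in a CAT(0) space. -/
theorem two_maps_asymptotically_regular {X : Type*} [MetricSpace X]
    (G : Geodesic X) (hX : CAT0 X)
    (T₁ T₂ : X → X) (h₁ : PropP2 T₁) (h₂ : PropP2 T₂)
    (hfix : ∃ u : X, T₂ (T₁ u) = u)
    (ε δ : ℕ → ℝ) (hsumε : Summable ε) (hsumδ : Summable δ)
    (x₀ : X) (x y : ℕ → X) (hx0 : x 0 = x₀)
    (hy : ∀ n : ℕ, dist (y n) (T₁ (x n)) ≤ ε n)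
    (hx : ∀ n : ℕ, dist (x (n + 1)) (T₂ (y n)) ≤ δ n) :
    Filter.Tendsto (fun n => dist (x n) (x (n + 1))) Filter.atTop (nhds 0) ∧
    Filter.Tendsto (fun n => dist (y n) (y (n + 1))) Filter.atTop (nhds 0) := by
  obtain ⟨u, hu⟩ := hfix
  exact two_maps_asymptotically_regular_general G hX h₁ h₂ (u := u)
    (by simp [Function.iterate_fixed (f := T₂ ∘ T₁) hu]) hsumε hsumδ hy hx
end

section
/- Let X be a complete CAT(0) space and C₁, …, C_r ⊆ X nonempty closed convex sets with ⋂ C_i ≠ ∅. Starting from any x₀, the cyclic projection sequence x_{n+1} = P_{C_{n(mod r)+1}}(x_n) Δ-converges to some point of ⋂_{i=1}^r C_i; if some C_i is locally compact, the convergence is strong. -/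
open Filter Topology Metric Set

/-- `u` is an asymptotic center of the sequence `s`: it minimizes `y ↦ limsup dist y (s n)`. -/
def IsAsymptoticCenter {X : Type*} [MetricSpace X] (s : ℕ → X) (u : X) : Prop :=
  ∀ y : X, Filter.limsup (fun n => dist u (s n)) Filter.atTop ≤
    Filter.limsup (fun n => dist y (s n)) Filter.atTop

/-- `s` Δ-converges to `u`: `u` is the unique asymptotic center of every subsequence. -/
def DeltaConvergesTo {X : Type*} [MetricSpace X] (s : ℕ → X) (u : X) : Prop :=
  ∀ φ : ℕ → ℕ, StrictMono φ →
    IsAsymptoticCenter (s ∘ φ) u ∧ ∀ v : X, IsAsymptoticCenter (s ∘ φ) v → v = u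

/-!
Projections onto sets containing a common point `c` never increase the distance to `c`; since
`dist (x n) c ^ 2` drops by at least `dist (x n) (x (n + 1)) ^ 2` at each step, consecutive terms
become arbitrarily close, and so `x` approaches every `C i`. The projection onto `C i` then cannot
increase the asymptotic radius, so by uniqueness it fixes the asymptotic center of any subsequence:
all these centers lie in `⋂ i, C i`. There the distances to `x n` converge, so the asymptotic radius
of a subsequence is that of `x` and all the centers coincide, with a point `u`. If `C i` is
locally compact, shrinking the terms of `x` in `C i` towards `u` by a fixed factor `t` gives a
sequence with a cluster point `w`, and along a subsequence the asymptotic radius at `w` is at most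
`(1 - t)` times that at `u`; minimality of the latter forces it to vanish.
-/

section CAT0Space

variable {X : Type*} [MetricSpace X]

namespace Geodesic

/-- Geodesic convexity with respect to the chosen geodesics of `G`. -/
def IsConvex (G : Geodesic X) (C : Set X) : Prop :=
  ∀ x ∈ C, ∀ y ∈ C, ∀ t ∈ Set.Icc (0 : ℝ) 1, G.geo x y t ∈ C

/-- The midpoint of the chosen geodesic from `a` to `b`, at which the CN inequality is applied. -/
noncomputable def midpoint (G : Geodesic X) (a b : X) : X := G.geo a b (1 / 2)

lemma dist_geo_left (G : Geodesic X) (a b : X) {t : ℝ} (ht : t ∈ Set.Icc (0 : ℝ) 1) :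
    dist a (G.geo a b t) = t * dist a b := by
  have h := G.geo_dist a b 0 (by simp) t ht
  rwa [G.geo_zero, zero_sub, abs_neg, abs_of_nonneg ht.1] at h

lemma dist_geo_right (G : Geodesic X) (a b : X) {t : ℝ} (ht : t ∈ Set.Icc (0 : ℝ) 1) :
    dist (G.geo a b t) b = (1 - t) * dist a b := by
  have h := G.geo_dist a b t ht 1 (by simp)
  rwa [G.geo_one, abs_sub_comm, abs_of_nonneg (sub_nonneg.2 ht.2)] at h

lemma dist_left_midpoint (G : Geodesic X) (a b : X) : dist a (G.midpoint a b) = dist a b / 2 := by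
  rw [midpoint, G.dist_geo_left a b (by norm_num)]
  ring

lemma dist_right_midpoint (G : Geodesic X) (a b : X) :
    dist b (G.midpoint a b) = dist a b / 2 := by
  rw [midpoint, dist_comm, G.dist_geo_right a b (by norm_num)]
  ring

lemma IsConvex.midpoint_mem {G : Geodesic X} {C : Set X} (hC : G.IsConvex C) {a b : X}
    (ha : a ∈ C) (hb : b ∈ C) : G.midpoint a b ∈ C :=
  hC a ha b hb _ (by norm_num)

end Geodesic

lemma CAT0.sq_dist_midpoint_le (hX : CAT0 X) (G : Geodesic X) (a b z : X) :
    dist z (G.midpoint a b) ^ 2 ≤ dist z a ^ 2 / 2 + dist z b ^ 2 / 2 - dist a b ^ 2 / 4 :=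
  hX a b z _ (G.dist_left_midpoint a b) (G.dist_right_midpoint a b)

/-- `p` is a point of `C` closest to `x`: the value at `x` of the metric projection onto `C`. -/
def IsNearestPoint (C : Set X) (x p : X) : Prop :=
  p ∈ C ∧ ∀ z ∈ C, dist x p ≤ dist x z

namespace IsNearestPoint

variable {G : Geodesic X} {C : Set X} {x p c : X}

-- Comparing `p` with the midpoint of `p` and `c` improves a constant `k` to `(k + 1) / 2`.
lemma sq_dist_add_mul_sq_dist_le (hp : IsNearestPoint C x p) (hX : CAT0 X) (hC : G.IsConvex C)
    (hc : c ∈ C) (n : ℕ) :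
    dist x p ^ 2 + (1 - (1 / 2) ^ n) * dist p c ^ 2 ≤ dist x c ^ 2 := by
  induction n generalizing c with
  | zero => simpa using pow_le_pow_left₀ dist_nonneg (hp.2 c hc) 2
  | succ n ih =>
    have hmid := ih (hC.midpoint_mem hp.1 hc)
    rw [G.dist_left_midpoint] at hmid
    rw [pow_succ (1 / 2 : ℝ) n]
    linarith [hX.sq_dist_midpoint_le G p c x]

lemma sq_dist_add_sq_dist_le (hp : IsNearestPoint C x p) (hX : CAT0 X) (hC : G.IsConvex C)
    (hc : c ∈ C) : dist x p ^ 2 + dist p c ^ 2 ≤ dist x c ^ 2 := by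
  have hpow : Tendsto (fun n : ℕ => ((1 : ℝ) / 2) ^ n) atTop (𝓝 0) :=
    tendsto_pow_atTop_nhds_zero_of_lt_one (by norm_num) (by norm_num)
  have hlim := ((hpow.const_sub 1).mul_const (dist p c ^ 2)).const_add (dist x p ^ 2)
  rw [sub_zero, one_mul] at hlim
  exact le_of_tendsto' hlim (hp.sq_dist_add_mul_sq_dist_le hX hC hc)

lemma dist_le_dist (hp : IsNearestPoint C x p) (hX : CAT0 X) (hC : G.IsConvex C) (hc : c ∈ C) :
    dist p c ≤ dist x c :=
  le_of_sq_le_sq (by linarith [hp.sq_dist_add_sq_dist_le hX hC hc, sq_nonneg (dist x p)])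
    dist_nonneg

lemma dist_le_add_two_mul_infDist (hp : IsNearestPoint C x p) (hX : CAT0 X) (hC : G.IsConvex C)
    (z : X) : dist p z ≤ dist x z + 2 * infDist z C := by
  have hhalf : (dist p z - dist x z) / 2 ≤ infDist z C := by
    refine (le_infDist ⟨p, hp.1⟩).2 fun y hy => ?_
    linarith [hp.dist_le_dist hX hC hy, dist_triangle_right p z y, dist_triangle x z y]
  linarith

end IsNearestPoint

lemma exists_forall_le_of_uniformly_midpoint_convex [CompleteSpace X] [Nonempty X] {f : X → ℝ}
    (hf : LowerSemicontinuous f) (hbdd : BddBelow (range f)) {k : ℝ} (hk : 0 < k)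
    (hmid : ∀ a b, ∃ m, f m ≤ (f a + f b) / 2 - k * dist a b ^ 2) : ∃ u, ∀ y, f u ≤ f y := by
  obtain ⟨v, hanti, hlim, hmem⟩ := exists_seq_tendsto_sInf (range_nonempty f) hbdd
  choose y hy using hmem
  obtain rfl : f ∘ y = v := funext hy
  set ρ := sInf (range f)
  have hρ : ∀ z, ρ ≤ f z := fun z => csInf_le hbdd (mem_range_self z)
  have hcauchy : CauchySeq y := by
    refine cauchySeq_of_le_tendsto_0 (fun N => √((f (y N) - ρ) / k)) (fun n m N hn hm => ?_) ?_
    · obtain ⟨w, hw⟩ := hmid (y n) (y m)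
      have hnN : f (y n) ≤ f (y N) := hanti hn
      have hmN : f (y m) ≤ f (y N) := hanti hm
      refine Real.le_sqrt_of_sq_le ((le_div_iff₀' hk).2 ?_)
      linarith [hρ w]
    · simpa using ((hlim.sub_const ρ).div_const k).sqrt
  obtain ⟨u, hu⟩ := cauchySeq_tendsto_of_complete hcauchy
  refine ⟨u, fun z => le_trans ?_ (hρ z)⟩
  refine le_of_forall_lt_imp_le_of_dense fun a ha => ?_
  exact ge_of_tendsto hlim ((hu.eventually (hf u a ha)).mono fun _ h => h.le)

/-- The asymptotic radius of `s` at `y`, the function minimized by asymptotic centers of `s`.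
The real `limsup` is meaningful only for bounded `s`; it is `0` by convention otherwise. -/
noncomputable def asymptoticRadius (s : ℕ → X) (y : X) : ℝ :=
  limsup (fun n => dist y (s n)) atTop

section AsymptoticRadius

variable {s : ℕ → X} {y : X} {a : ℝ}

lemma asymptoticRadius_le_of_eventually_le (h : ∀ᶠ n in atTop, dist y (s n) ≤ a) :
    asymptoticRadius s y ≤ a :=
  limsup_le_of_le
    (isBoundedUnder_of ⟨0, fun _ => dist_nonneg⟩ : IsBoundedUnder (· ≥ ·) atTop
      fun n => dist y (s n)).isCoboundedUnder_le h

lemma asymptoticRadius_le_of_tendsto {b : ℕ → ℝ} (hb : Tendsto b atTop (𝓝 a))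
    (h : ∀ n, dist y (s n) ≤ b n) : asymptoticRadius s y ≤ a :=
  le_of_forall_gt_imp_ge_of_dense fun _ ha => asymptoticRadius_le_of_eventually_le <|
    (hb.eventually_lt_const ha).mono fun n hn => (h n).trans hn.le

lemma eventually_dist_lt_of_asymptoticRadius_lt (hs : Bornology.IsBounded (range s))
    (h : asymptoticRadius s y < a) : ∀ᶠ n in atTop, dist y (s n) < a := by
  obtain ⟨B, hB⟩ := hs.subset_closedBall y
  refine eventually_lt_of_limsup_lt h (isBoundedUnder_of ⟨B, fun n => ?_⟩)
  rw [dist_comm]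
  exact hB (mem_range_self n)

lemma asymptoticRadius_nonneg (hs : Bornology.IsBounded (range s)) (y : X) :
    0 ≤ asymptoticRadius s y :=
  le_of_forall_gt_imp_ge_of_dense fun _ ha =>
    have ⟨_, hn⟩ := (eventually_dist_lt_of_asymptoticRadius_lt hs ha).exists
    dist_nonneg.trans hn.le

lemma asymptoticRadius_le_of_dist_le_add (hs : Bornology.IsBounded (range s)) {z : X} {b : ℕ → ℝ}
    {β : ℝ} (hb : Tendsto b atTop (𝓝 β)) (h : ∀ n, dist y (s n) ≤ dist z (s n) + b n) :
    asymptoticRadius s y ≤ asymptoticRadius s z + β := by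
  refine le_of_forall_pos_le_add fun ε hε => asymptoticRadius_le_of_eventually_le ?_
  filter_upwards [eventually_dist_lt_of_asymptoticRadius_lt hs
      (lt_add_of_pos_right (asymptoticRadius s z) (half_pos hε)),
    hb.eventually_lt_const (lt_add_of_pos_right β (half_pos hε))] with n hz hbn
  linarith [h n]

lemma lipschitzWith_asymptoticRadius (hs : Bornology.IsBounded (range s)) :
    LipschitzWith 1 (asymptoticRadius s) :=
  .of_le_add fun y z => asymptoticRadius_le_of_dist_le_add hs tendsto_const_nhds fun n => by
    linarith [dist_triangle y z (s n)]

lemma sq_asymptoticRadius_le_of_eventually_le (hs : Bornology.IsBounded (range s))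
    (h : ∀ᶠ n in atTop, dist y (s n) ^ 2 ≤ a) : asymptoticRadius s y ^ 2 ≤ a := by
  have ha : 0 ≤ a := have ⟨_, hn⟩ := h.exists; (sq_nonneg _).trans hn
  exact (Real.le_sqrt (asymptoticRadius_nonneg hs y) ha).1 <|
    asymptoticRadius_le_of_eventually_le (h.mono fun _ hn => Real.le_sqrt_of_sq_le hn)

lemma CAT0.sq_asymptoticRadius_midpoint_le (hX : CAT0 X) (G : Geodesic X)
    (hs : Bornology.IsBounded (range s)) (a b : X) :
    asymptoticRadius s (G.midpoint a b) ^ 2 ≤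
      asymptoticRadius s a ^ 2 / 2 + asymptoticRadius s b ^ 2 / 2 - dist a b ^ 2 / 4 := by
  set R := asymptoticRadius s
  have hε : ∀ ε > 0, R (G.midpoint a b) ^ 2 ≤
      (R a + ε) ^ 2 / 2 + (R b + ε) ^ 2 / 2 - dist a b ^ 2 / 4 := by
    intro ε hε
    apply sq_asymptoticRadius_le_of_eventually_le hs
    filter_upwards [
      eventually_dist_lt_of_asymptoticRadius_lt hs (lt_add_of_pos_right (R a) hε),
      eventually_dist_lt_of_asymptoticRadius_lt hs (lt_add_of_pos_right (R b) hε)] with n ha hb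
    have hcn := hX.sq_dist_midpoint_le G a b (s n)
    simp only [dist_comm (s n)] at hcn
    linarith [pow_le_pow_left₀ dist_nonneg ha.le 2, pow_le_pow_left₀ dist_nonneg hb.le 2]
  have hcont : Continuous fun ε : ℝ =>
      (R a + ε) ^ 2 / 2 + (R b + ε) ^ 2 / 2 - dist a b ^ 2 / 4 := by fun_prop
  have hlim := (hcont.tendsto 0).mono_left (nhdsWithin_le_nhds (s := Ioi 0))
  simp only [add_zero] at hlim
  exact ge_of_tendsto hlim (eventually_mem_nhdsWithin.mono hε)

end AsymptoticRadius

section AsymptoticCenter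

variable {G : Geodesic X} {s : ℕ → X} {u v : X}

lemma IsAsymptoticCenter.eq_of_asymptoticRadius_le (hu : IsAsymptoticCenter s u) (hX : CAT0 X)
    (G : Geodesic X) (hs : Bornology.IsBounded (range s))
    (hv : asymptoticRadius s v ≤ asymptoticRadius s u) : v = u := by
  have hcn := hX.sq_asymptoticRadius_midpoint_le G hs v u
  have hmin : asymptoticRadius s u ^ 2 ≤ asymptoticRadius s (G.midpoint v u) ^ 2 :=
    pow_le_pow_left₀ (asymptoticRadius_nonneg hs u) (hu _) 2
  have hvu := pow_le_pow_left₀ (asymptoticRadius_nonneg hs v) hv 2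
  exact dist_le_zero.1 (sq_nonpos_iff _ |>.1 (by linarith)).le

lemma exists_isAsymptoticCenter [CompleteSpace X] (hX : CAT0 X) (G : Geodesic X)
    (hs : Bornology.IsBounded (range s)) : ∃ u, IsAsymptoticCenter s u := by
  have : Nonempty X := ⟨s 0⟩
  obtain ⟨u, hu⟩ : ∃ u, ∀ y, asymptoticRadius s u ^ 2 ≤ asymptoticRadius s y ^ 2 := by
    refine exists_forall_le_of_uniformly_midpoint_convex (k := 1 / 4)
      ((lipschitzWith_asymptoticRadius hs).continuous.pow 2).lowerSemicontinuous
      ⟨0, forall_mem_range.2 fun y => sq_nonneg _⟩ (by norm_num) fun a b => ⟨G.midpoint a b, ?_⟩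
    linarith [hX.sq_asymptoticRadius_midpoint_le G hs a b]
  exact ⟨u, fun y => le_of_sq_le_sq (hu y) (asymptoticRadius_nonneg hs y)⟩

lemma IsAsymptoticCenter.mem_of_tendsto_infDist (hu : IsAsymptoticCenter s u) (hX : CAT0 X)
    (hs : Bornology.IsBounded (range s)) {C : Set X} (hC : G.IsConvex C) {p : X}
    (hp : IsNearestPoint C u p) (hsC : Tendsto (fun n => infDist (s n) C) atTop (𝓝 0)) :
    u ∈ C := by
  have hpu : asymptoticRadius s p ≤ asymptoticRadius s u := by
    simpa using asymptoticRadius_le_of_dist_le_add hs (hsC.const_mul 2) fun n =>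
      hp.dist_le_add_two_mul_infDist hX hC (s n)
  exact hu.eq_of_asymptoticRadius_le hX G hs hpu ▸ hp.1

end AsymptoticCenter

/-- Fejér monotonicity of `x` with respect to `F`: it makes the asymptotic radius at a point of `F`
the same for all subsequences of `x`. -/
def FejerMonotone (F : Set X) (x : ℕ → X) : Prop :=
  ∀ c ∈ F, Antitone fun n => dist c (x n)

namespace FejerMonotone

variable {F : Set X} {x : ℕ → X} {c : X}

lemma exists_tendsto_dist (h : FejerMonotone F x) (hc : c ∈ F) :
    ∃ L, Tendsto (fun n => dist c (x n)) atTop (𝓝 L) :=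
  ⟨_, tendsto_atTop_ciInf (h c hc) ⟨0, forall_mem_range.2 fun _ => dist_nonneg⟩⟩

lemma isBounded_range (h : FejerMonotone F x) (hF : F.Nonempty) :
    Bornology.IsBounded (range x) := by
  obtain ⟨c, hc⟩ := hF
  refine (isBounded_closedBall (x := c) (r := dist c (x 0))).subset (range_subset_iff.2 fun n => ?_)
  rw [mem_closedBall']
  exact h c hc n.zero_le

-- On `F` the asymptotic radius of a subsequence is that of `x`, so the two centers coincide.
lemma deltaConvergesTo (h : FejerMonotone F x) (hX : CAT0 X) (G : Geodesic X) {u : X} (hu : u ∈ F)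
    (hux : IsAsymptoticCenter x u)
    (hsub : ∀ φ : ℕ → ℕ, StrictMono φ → ∃ v ∈ F, IsAsymptoticCenter (x ∘ φ) v) :
    DeltaConvergesTo x u := by
  intro φ hφ
  have hbdd : Bornology.IsBounded (range (x ∘ φ)) :=
    (h.isBounded_range ⟨u, hu⟩).subset (range_comp_subset_range φ x)
  have hradius : ∀ c ∈ F, asymptoticRadius (x ∘ φ) c = asymptoticRadius x c := fun c hc =>
    have ⟨_, hL⟩ := h.exists_tendsto_dist hc
    (hL.comp hφ.tendsto_atTop).limsup_eq.trans hL.limsup_eq.symm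
  obtain ⟨v, hv, hvφ⟩ := hsub φ hφ
  obtain rfl : u = v := hvφ.eq_of_asymptoticRadius_le hX G hbdd <| by
    rw [hradius u hu, hradius v hv]
    exact hux v
  exact ⟨hvφ, fun w hw => hvφ.eq_of_asymptoticRadius_le hX G hbdd (hw u)⟩

end FejerMonotone

lemma Geodesic.IsConvex.exists_asymptoticRadius_comp_le {G : Geodesic X} {C : Set X}
    [WeaklyLocallyCompactSpace C] (hC : G.IsConvex C) {u : X} (hu : u ∈ C) {s : ℕ → X}
    (hs : ∀ n, s n ∈ C) {L : ℝ} (hL : Tendsto (fun n => dist u (s n)) atTop (𝓝 L)) :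
    ∃ t > 0, ∃ w, ∃ φ : ℕ → ℕ, StrictMono φ ∧ asymptoticRadius (s ∘ φ) w ≤ (1 - t) * L := by
  obtain ⟨δ, hδ, hcompact⟩ := exists_isCompact_closedBall (⟨u, hu⟩ : C)
  obtain ⟨B, hB⟩ := hL.bddAbove_range
  have hdist : ∀ n, dist u (s n) ≤ B := fun n => hB (mem_range_self n)
  have hB0 : 0 ≤ B := dist_nonneg.trans (hdist 0)
  obtain ⟨t, ht, ht0, htB⟩ : ∃ t ∈ Set.Icc (0 : ℝ) 1, 0 < t ∧ t * B ≤ δ := by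
    refine ⟨δ / (δ + B), ⟨by positivity, ?_⟩, by positivity, ?_⟩
    · exact div_le_one_of_le₀ (by linarith) (by positivity)
    · rw [div_mul_eq_mul_div]
      exact div_le_of_le_mul₀ (by positivity) hδ.le (by gcongr; linarith)
  let z (n : ℕ) : C := ⟨G.geo u (s n) t, hC u hu _ (hs n) t ht⟩
  have hz : ∀ n, z n ∈ closedBall (⟨u, hu⟩ : C) δ := fun n => by
    rw [mem_closedBall', Subtype.dist_eq, G.dist_geo_left _ _ ht]
    exact (mul_le_mul_of_nonneg_left (hdist n) ht.1).trans htB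
  obtain ⟨w, -, φ, hφ, hw⟩ := hcompact.tendsto_subseq hz
  have hbound : Tendsto (fun n => dist w (z (φ n)) + (1 - t) * dist u (s (φ n))) atTop
      (𝓝 ((1 - t) * L)) := by
    simpa using ((tendsto_const_nhds (x := w)).dist hw).add
      ((hL.comp hφ.tendsto_atTop).const_mul (1 - t))
  refine ⟨t, ht0, w, φ, hφ, asymptoticRadius_le_of_tendsto hbound fun n => ?_⟩
  rw [← G.dist_geo_right _ _ ht]
  exact dist_triangle _ _ _

lemma DeltaConvergesTo.tendsto_of_frequently_mem {G : Geodesic X} {x : ℕ → X} {u : X}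
    (h : DeltaConvergesTo x u) {L : ℝ} (hL : Tendsto (fun n => dist u (x n)) atTop (𝓝 L))
    {C : Set X} [WeaklyLocallyCompactSpace C] (hC : G.IsConvex C) (hu : u ∈ C)
    (hxC : ∃ᶠ n in atTop, x n ∈ C) : Tendsto x atTop (𝓝 u) := by
  obtain ⟨ψ, hψ, hψC⟩ := extraction_of_frequently_atTop hxC
  obtain ⟨t, ht, w, φ, hφ, hw⟩ :=
    hC.exists_asymptoticRadius_comp_le hu hψC (hL.comp hψ.tendsto_atTop)
  have hψφ := hψ.comp hφ
  have hLw : L ≤ asymptoticRadius (x ∘ ψ ∘ φ) w :=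
    (hL.comp hψφ.tendsto_atTop).limsup_eq.symm.trans_le ((h _ hψφ).1 w)
  have hL_nonpos : L ≤ 0 := nonpos_of_mul_nonpos_right (by linarith [hLw.trans hw]) ht
  obtain rfl : L = 0 := hL_nonpos.antisymm (ge_of_tendsto' hL fun _ => dist_nonneg)
  exact tendsto_iff_dist_tendsto_zero.2 (by simpa only [dist_comm u] using hL)

/-- Almost cyclic control: every index is selected in each window of `r` consecutive steps. -/
def IsAlmostCyclic {ι : Type*} (r : ℕ) (σ : ℕ → ι) : Prop :=
  ∀ i n, ∃ m ∈ Finset.Ico n (n + r), σ m = i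

lemma isAlmostCyclic_mod {r : ℕ} (hr : 0 < r) :
    IsAlmostCyclic r fun n => (⟨n % r, Nat.mod_lt n hr⟩ : Fin r) := by
  intro i n
  have hi : (i : ℕ) ∈ (Finset.Ico n (n + r)).image (· % r) := by
    rw [Nat.image_Ico_mod]
    exact Finset.mem_range.2 i.2
  obtain ⟨m, hm, hmi⟩ := Finset.mem_image.1 hi
  exact ⟨m, hm, Fin.ext hmi⟩

lemma IsAlmostCyclic.frequently_mem {α ι : Type*} {C : ι → Set α} {σ : ℕ → ι} {x : ℕ → α}
    {r : ℕ} (hσ : IsAlmostCyclic r σ) (hxC : ∀ n, x (n + 1) ∈ C (σ n)) (i : ι) :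
    ∃ᶠ n in atTop, x n ∈ C i := by
  refine frequently_atTop.2 fun n => ?_
  obtain ⟨m, hm, rfl⟩ := hσ i n
  exact ⟨m + 1, (Finset.mem_Ico.1 hm).1.trans m.le_succ, hxC m⟩

section ProjectionSequence

variable {ι : Type*} {G : Geodesic X} {C : ι → Set X} {σ : ℕ → ι} {x : ℕ → X} {r : ℕ}

lemma fejerMonotone_of_isNearestPoint (hX : CAT0 X) (hC : ∀ i, G.IsConvex (C i))
    (hx : ∀ n, IsNearestPoint (C (σ n)) (x n) (x (n + 1))) : FejerMonotone (⋂ i, C i) x :=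
  fun c hc => antitone_nat_of_succ_le fun n => by
    simpa only [dist_comm c] using (hx n).dist_le_dist hX (hC _) (mem_iInter.1 hc _)

lemma tendsto_dist_succ_of_isNearestPoint (hX : CAT0 X) (hC : ∀ i, G.IsConvex (C i))
    (hint : (⋂ i, C i).Nonempty) (hx : ∀ n, IsNearestPoint (C (σ n)) (x n) (x (n + 1))) :
    Tendsto (fun n => dist (x n) (x (n + 1))) atTop (𝓝 0) := by
  obtain ⟨c, hc⟩ := hint
  obtain ⟨L, hL⟩ := (fejerMonotone_of_isNearestPoint hX hC hx).exists_tendsto_dist hc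
  have hdrop : Tendsto (fun n => dist c (x n) ^ 2 - dist c (x (n + 1)) ^ 2) atTop (𝓝 0) := by
    simpa using (hL.pow 2).sub ((hL.comp (tendsto_add_atTop_nat 1)).pow 2)
  refine squeeze_zero (fun _ => dist_nonneg) (fun n => Real.le_sqrt_of_sq_le ?_)
    (by simpa using hdrop.sqrt)
  have hpyth := (hx n).sq_dist_add_sq_dist_le hX (hC _) (mem_iInter.1 hc _)
  simp only [dist_comm _ c] at hpyth
  linarith

lemma IsAlmostCyclic.tendsto_infDist (hσ : IsAlmostCyclic r σ) (hxC : ∀ n, x (n + 1) ∈ C (σ n))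
    (hstep : Tendsto (fun n => dist (x n) (x (n + 1))) atTop (𝓝 0)) (i : ι) :
    Tendsto (fun n => infDist (x n) (C i)) atTop (𝓝 0) := by
  have hsum :
      Tendsto (fun n => ∑ m ∈ Finset.Ico n (n + r), dist (x m) (x (m + 1))) atTop (𝓝 0) := by
    simp only [Finset.sum_Ico_eq_sum_range, add_tsub_cancel_left]
    simpa using tendsto_finsetSum (Finset.range r) fun l _ => hstep.comp (tendsto_add_atTop_nat l)
  refine squeeze_zero (fun _ => infDist_nonneg) (fun n => ?_) hsum
  obtain ⟨m, hm, rfl⟩ := hσ i n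
  rw [Finset.mem_Ico] at hm
  calc infDist (x n) (C (σ m)) ≤ dist (x n) (x (m + 1)) := infDist_le_dist_of_mem (hxC m)
    _ ≤ ∑ l ∈ Finset.Ico n (m + 1), dist (x l) (x (l + 1)) := dist_le_Ico_sum_dist x (by lia)
    _ ≤ ∑ l ∈ Finset.Ico n (n + r), dist (x l) (x (l + 1)) :=
      Finset.sum_le_sum_of_subset_of_nonneg (Finset.Ico_subset_Ico_right hm.2)
        fun _ _ _ => dist_nonneg

theorem cyclic_projection_converges_general [CompleteSpace X] (hX : CAT0 X)
    (hC : ∀ i, G.IsConvex (C i)) (hint : (⋂ i, C i).Nonempty) {P : ι → X → X}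
    (hP : ∀ i y, IsNearestPoint (C i) y (P i y)) (hσ : IsAlmostCyclic r σ)
    (hx : ∀ n, x (n + 1) = P (σ n) (x n)) :
    ∃ u ∈ ⋂ i, C i, DeltaConvergesTo x u ∧
      ((∃ i, WeaklyLocallyCompactSpace (C i)) → Tendsto x atTop (𝓝 u)) := by
  have hnear : ∀ n, IsNearestPoint (C (σ n)) (x n) (x (n + 1)) := fun n => hx n ▸ hP _ _
  have hfejer := fejerMonotone_of_isNearestPoint hX hC hnear
  have hstep := tendsto_dist_succ_of_isNearestPoint hX hC hint hnear
  have hcenter : ∀ φ : ℕ → ℕ, StrictMono φ → ∃ v ∈ ⋂ i, C i, IsAsymptoticCenter (x ∘ φ) v := by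
    intro φ hφ
    have hbdd := (hfejer.isBounded_range hint).subset (range_comp_subset_range φ x)
    obtain ⟨v, hv⟩ := exists_isAsymptoticCenter hX G hbdd
    refine ⟨v, mem_iInter.2 fun i => ?_, hv⟩
    exact hv.mem_of_tendsto_infDist hX hbdd (hC i) (hP i v)
      ((hσ.tendsto_infDist (fun n => (hnear n).1) hstep i).comp hφ.tendsto_atTop)
  obtain ⟨u, hu, hux⟩ := hcenter id strictMono_id
  have hΔ := hfejer.deltaConvergesTo hX G hu hux hcenter
  obtain ⟨L, hL⟩ := hfejer.exists_tendsto_dist hu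
  refine ⟨u, hu, hΔ, fun ⟨i, _⟩ => ?_⟩
  exact hΔ.tendsto_of_frequently_mem hL (hC i) (mem_iInter.1 hu i)
    (hσ.frequently_mem (fun n => (hnear n).1) i)

end ProjectionSequence

end CAT0Space

/-- Δ-convergence of the cyclic projection method for finitely many nonempty closed convex
sets with nonempty intersection in a complete CAT(0) space, with strong convergence when
one of the sets is locally compact. -/
theorem cyclic_projection_converges {X : Type*} [MetricSpace X] [CompleteSpace X]
    (G : Geodesic X) (hX : CAT0 X)
    {r : ℕ} (hr : 0 < r) (C : Fin r → Set X)
    (hne : ∀ i, (C i).Nonempty) (hcl : ∀ i, IsClosed (C i))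
    (hconv : ∀ i, ∀ x ∈ C i, ∀ y ∈ C i, ∀ t ∈ Set.Icc (0:ℝ) 1, G.geo x y t ∈ C i)
    (hint : (⋂ i, C i).Nonempty)
    (P : Fin r → X → X)
    (hP : ∀ i, ∀ x : X, P i x ∈ C i ∧ ∀ z ∈ C i, dist x (P i x) ≤ dist x z)
    (x₀ : X) (x : ℕ → X) (hx0 : x 0 = x₀)
    (hx : ∀ n : ℕ, x (n + 1) = P ⟨n % r, Nat.mod_lt n hr⟩ (x n)) :
    ∃ u ∈ ⋂ i, C i, DeltaConvergesTo x u ∧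
      ((∃ i, LocallyCompactSpace (C i)) → Filter.Tendsto x Filter.atTop (nhds u)) := by
  obtain ⟨u, hu, hΔ, hstrong⟩ := cyclic_projection_converges_general hX hconv hint hP
    (isAlmostCyclic_mod hr) hx
  exact ⟨u, hu, hΔ, fun ⟨i, _⟩ => hstrong ⟨i, inferInstance⟩⟩
end
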